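/- Let k ≥ l ≥ 1 and let U_l^k = {τ ∈ S_k : τ(i) = i for all i with l < i ≤ k}. Let E = Σ_{j=0}^{l−1} C_j·X^j ∈ ℚ⟦X⟧, where C_j is the j-th Catalan number, and define R_{0;E} = E and R_{m+1;E} = (1 − X·R_{m;E})⁻¹ in ℚ⟦X⟧. Then Σ_{n≥0} |{π ∈ S_n : π avoids 132 and every pattern in U_l^k}|·Xⁿ = R_{k−l;E}. -/

import Mathlib

/-- A pattern is a permutation of `{1,…,k}` for some `k`. -/
def Pattern : Type := Σ k : ℕ, Equiv.Perm (Fin k)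

/-- `IsOccurrence τ π f` says that the strictly increasing tuple of indices `f` is an
occurrence of the pattern `τ` in the permutation `π`, i.e. `π ∘ f` is order-isomorphic
to `τ`. -/
def IsOccurrence {k n : ℕ} (τ : Equiv.Perm (Fin k)) (π : Equiv.Perm (Fin n))
    (f : Fin k → Fin n) : Prop :=
  StrictMono f ∧ ∀ a b : Fin k, τ a < τ b ↔ π (f a) < π (f b)

/-- `π` contains the pattern `τ` (at least once). -/
def Contains {k n : ℕ} (τ : Equiv.Perm (Fin k)) (π : Equiv.Perm (Fin n)) : Prop :=
  ∃ f : Fin k → Fin n, IsOccurrence τ π f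

/-- `π` contains the pattern `τ` exactly once. -/
def ContainsOnce {k n : ℕ} (τ : Equiv.Perm (Fin k)) (π : Equiv.Perm (Fin n)) : Prop :=
  ∃! f : Fin k → Fin n, IsOccurrence τ π f

/-- `π` avoids every pattern in the set `T`. -/
def AvoidsSet {n : ℕ} (T : Set Pattern) (π : Equiv.Perm (Fin n)) : Prop :=
  ∀ p ∈ T, ¬ Contains p.2 π

/-- `f_T(n)`: the number of permutations of `{1,…,n}` avoiding every pattern in `T`. -/
noncomputable def avoidCount (T : Set Pattern) (n : ℕ) : ℕ :=
  Nat.card {π : Equiv.Perm (Fin n) // AvoidsSet T π}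

/-- The pattern `132 ∈ S₃` (zero-indexed: `0 ↦ 0, 1 ↦ 2, 2 ↦ 1`). -/
noncomputable def p132 : Equiv.Perm (Fin 3) := Equiv.ofBijective ![0, 2, 1] (by decide)

/-- The continued fraction `R_{m;E}`: `R_{0;E} = E`, `R_{m+1;E} = (1 − X·R_{m;E})⁻¹`. -/
noncomputable def Rcf (E : PowerSeries ℚ) : ℕ → PowerSeries ℚ
  | 0 => E
  | m + 1 => (1 - PowerSeries.X * Rcf E m)⁻¹

/-- `E = Σ_{j=0}^{l−1} C_j X^j`, the `l`-truncated Catalan generating function. -/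
noncomputable def catE (l : ℕ) : PowerSeries ℚ :=
  ∑ j ∈ Finset.range l, PowerSeries.C (catalan j : ℚ) * PowerSeries.X ^ j

/-- `U_l^k`: the permutations `τ ∈ S_k` (zero-indexed on `Fin k`) fixing all positions
`i` with `l ≤ i < k` (one-indexed: `τ(i) = i` for `l < i ≤ k`). -/
def Ulk (l k : ℕ) : Set (Equiv.Perm (Fin k)) := {τ | ∀ i : Fin k, l ≤ (i : ℕ) → τ i = i}

/-!
Split a 132-avoiding permutation at its maximum as `A M B`: every entry of `A` exceeds every entry
of `B`, and `A`, `B` are arbitrary 132-avoiding words. A pattern of `U_l^k` is an arbitrary word of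
length `l` followed by `k - l` records, so for `k > l` its last entry is its maximum. An occurrence
whose last entry lies in `B` is contained in `B`; otherwise deleting that entry leaves an occurrence
of a pattern of `U_l^{k-1}` in `A`, and conversely such an occurrence is completed by `M`. Hence
`F_k = 1 + X F_{k-1} F_k`, while for `k = l` all permutations of length at least `l` are excluded.
-/

open Finset.HasAntidiagonal
open scoped List

section Words

variable {α : Type*} {l k : ℕ} {L A B S : List α} {M x : α}

/-- A word avoids the pattern 132 if no three of its entries `x, y, z`, in this order of positions,
satisfy `x < z < y`. -/
def Avoids132 [LT α] (L : List α) : Prop :=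
  L.Triplewise fun x y z => ¬(x < z ∧ z < y)

/-- Every entry of the word at (zero-based) index at least `l` is a record, i.e. exceeds all entries
before it. The words of length `k` without repetitions with this property are those which are
order isomorphic to a permutation in `U_l^k`. -/
def RecordsFrom [LT α] (l : ℕ) (S : List α) : Prop :=
  ∀ ⦃i j : ℕ⦄ (hij : i < j) (hj : j < S.length), l ≤ j → S[i] < S[j]

/-- Containment of a pattern from `U_l^k` in a word, see `RecordsFrom`. -/
def ContainsRecords [LT α] (l k : ℕ) (L : List α) : Prop :=
  ∃ S, S <+ L ∧ S.length = k ∧ RecordsFrom l S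

/-- The shape `A M B` of a 132-avoiding word split at its maximum `M`. -/
structure IsMaxSplit [LT α] (A : List α) (M : α) (B : List α) : Prop where
  left_lt : ∀ x ∈ A, x < M
  right_lt : ∀ y ∈ B, y < M
  right_lt_left : ∀ x ∈ A, ∀ y ∈ B, y < x

theorem IsMaxSplit.avoids132_iff [Preorder α] (h : IsMaxSplit A M B) :
    Avoids132 (A ++ M :: B) ↔ Avoids132 A ∧ Avoids132 B := by
  refine ⟨fun hL => ?_, fun ⟨hA, hB⟩ => ?_⟩
  · obtain ⟨hA, hMB, -⟩ := List.triplewise_append.1 hL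
    exact ⟨hA, (List.triplewise_cons.1 hMB).2⟩
  · have hMB : Avoids132 (M :: B) := List.triplewise_cons.2
      ⟨List.pairwise_of_forall_mem_list fun y hy z _ hyz =>
        lt_asymm (hyz.1.trans hyz.2) (h.right_lt y hy), hB⟩
    refine List.triplewise_append.2 ⟨hA, hMB, fun x hx => ?_, fun z hz => ?_⟩
    · refine List.pairwise_cons.2 ⟨fun z hz hxz => lt_asymm hxz.1 (h.right_lt_left x hx z hz), ?_⟩
      exact List.pairwise_of_forall_mem_list fun _ _ z hz hxz =>
        lt_asymm hxz.1 (h.right_lt_left x hx z hz)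
    · refine List.pairwise_of_forall_mem_list fun x hx y hy hxyz => ?_
      rcases List.mem_cons.1 hz with rfl | hzB
      · exact lt_asymm hxyz.2 (h.left_lt y hy)
      · exact lt_asymm hxyz.1 (h.right_lt_left x hx z hzB)

theorem Avoids132.isMaxSplit [LinearOrder α] (h : Avoids132 (A ++ M :: B))
    (hnodup : (A ++ B).Nodup) (hlt : ∀ x ∈ A ++ B, x < M) : IsMaxSplit A M B where
  left_lt x hx := hlt x (List.mem_append_left B hx)
  right_lt y hy := hlt y (List.mem_append_right A hy)
  right_lt_left x hx y hy := by
    obtain ⟨-, -, hAMB, -⟩ := List.triplewise_append.1 h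
    have hxMy : ¬(x < y ∧ y < M) := (List.pairwise_cons.1 (hAMB x hx)).1 y hy
    have hne : x ≠ y := (List.nodup_append.1 hnodup).2.2 x hx y hy
    have hyM : y < M := hlt y (List.mem_append_right A hy)
    exact lt_of_le_of_ne (not_lt.1 fun hxy => hxMy ⟨hxy, hyM⟩) hne.symm

theorem recordsFrom_concat_iff [LT α] (hl : l ≤ S.length) :
    RecordsFrom l (S ++ [x]) ↔ RecordsFrom l S ∧ ∀ y ∈ S, y < x := by
  refine ⟨fun h => ⟨fun i j hij hj hlj => ?_, fun y hy => ?_⟩, fun ⟨hS, hx⟩ i j hij hj hlj => ?_⟩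
  · have hlt := h hij (by grind) hlj
    grind
  · obtain ⟨i, hi, rfl⟩ := List.getElem_of_mem hy
    have hlt := h hi (by simp) hl
    grind
  · by_cases hjS : j < S.length
    · have hlt := hS hij hjS hlj
      grind
    · have hiS : i < S.length := by grind
      have hlt := hx S[i] (S.getElem_mem hiS)
      grind

theorem ContainsRecords.mono [LT α] (h : ContainsRecords l k A) (hAL : A <+ L) :
    ContainsRecords l k L :=
  let ⟨S, hSA, hS⟩ := h
  ⟨S, hSA.trans hAL, hS⟩

theorem containsRecords_self_iff [LT α] : ContainsRecords l l L ↔ l ≤ L.length := by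
  refine ⟨fun ⟨S, hSL, hS, _⟩ => hS ▸ hSL.length_le, fun hl => ?_⟩
  have hlen : (L.take l).length = l := List.length_take_of_le hl
  exact ⟨L.take l, List.take_sublist l L, hlen, fun i j _ hj hlj => by omega⟩

theorem containsRecords_succ_iff_exists_concat [LT α] (hlk : l ≤ k) :
    ContainsRecords l (k + 1) L ↔
      ∃ S x, S ++ [x] <+ L ∧ S.length = k ∧ RecordsFrom l S ∧ ∀ y ∈ S, y < x := by
  constructor
  · rintro ⟨T, hTL, hT, hrec⟩
    obtain ⟨S, x, rfl⟩ := T.eq_nil_or_concat'.resolve_left (by rintro rfl; simp at hT)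
    have hS : S.length = k := by simpa using hT
    exact ⟨S, x, hTL, hS, (recordsFrom_concat_iff (hS ▸ hlk)).1 hrec⟩
  · rintro ⟨S, x, hSL, rfl, hrec⟩
    exact ⟨S ++ [x], hSL, by simp, (recordsFrom_concat_iff hlk).2 hrec⟩

theorem not_containsRecords_succ_nil [LT α] : ¬ContainsRecords l (k + 1) ([] : List α) := by
  rintro ⟨S, hS, hlen, -⟩
  simp [List.sublist_nil.1 hS] at hlen

theorem sublist_left_or_mem_right_of_concat_sublist (h : S ++ [x] <+ A ++ M :: B) :
    S <+ A ∨ x ∈ B := by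
  obtain ⟨P, Q, hPQ, hPA, hQ⟩ := List.sublist_append_iff.1 h
  obtain rfl | ⟨Q, y, rfl⟩ := Q.eq_nil_or_concat'
  · rw [List.append_nil] at hPQ
    exact .inl ((List.sublist_append_left S [x]).trans (hPQ ▸ hPA))
  · rw [← List.append_assoc] at hPQ
    obtain ⟨rfl, hxy⟩ := List.append_inj' hPQ rfl
    obtain rfl : x = y := List.singleton_inj.1 hxy
    cases Q with
    | nil => exact .inl (by simpa using hPA)
    | cons q Q => exact .inr (hQ.tail.subset (by simp))

theorem IsMaxSplit.sublist_right_of_forall_le [Preorder α] (h : IsMaxSplit A M B)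
    (hS : S <+ A ++ M :: B) (hx : x ∈ B) (hle : ∀ y ∈ S, y ≤ x) : S <+ B := by
  obtain ⟨P, Q, rfl, hPA, hQ⟩ := List.sublist_append_iff.1 hS
  obtain rfl : P = [] := List.eq_nil_iff_forall_not_mem.2 fun p hp =>
    (h.right_lt_left p (hPA.subset hp) x hx).not_ge (hle p (by simp [hp]))
  have hMQ : M ∉ Q := fun hM => (h.right_lt x hx).not_ge (hle M (by simp [hM]))
  obtain hQB | ⟨Q', rfl, -⟩ := List.sublist_cons_iff.1 hQ
  · simpa using hQB
  · simp at hMQ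

theorem IsMaxSplit.containsRecords_succ_iff [Preorder α] (h : IsMaxSplit A M B) (hlk : l ≤ k) :
    ContainsRecords l (k + 1) (A ++ M :: B) ↔
      ContainsRecords l k A ∨ ContainsRecords l (k + 1) B := by
  refine ⟨fun hL => ?_, ?_⟩
  · obtain ⟨S, x, hSL, hk, hrec, hlt⟩ := (containsRecords_succ_iff_exists_concat hlk).1 hL
    rcases sublist_left_or_mem_right_of_concat_sublist hSL with hSA | hx
    · exact .inl ⟨S, hSA, hk, hrec⟩
    · exact .inr <| (containsRecords_succ_iff_exists_concat hlk).2
        ⟨S, x, h.sublist_right_of_forall_le hSL hx (by grind), hk, hrec, hlt⟩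
  · rintro (⟨S, hSA, hk, hrec⟩ | hB)
    · exact (containsRecords_succ_iff_exists_concat hlk).2 ⟨S, M, hSA.append (by simp), hk, hrec,
        fun y hy => h.left_lt y (hSA.subset hy)⟩
    · exact hB.mono ((List.sublist_cons_self M B).trans (List.sublist_append_right A _))

end Words

section Counting

variable {P Q : List ℕ → Prop} {A B L : List ℕ} {c n l : ℕ}

open Classical in
/-- The 132-avoiding arrangements of `c, …, c + n - 1` which satisfy `P`. The offset `c` makes room
for the left part of a word split at its maximum, whose entries are not an initial segment. -/
noncomputable def avoiders132 (P : List ℕ → Prop) (c n : ℕ) : Finset (List ℕ) :=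
  {L ∈ (List.range' c n).permutations.toFinset | Avoids132 L ∧ P L}

/-- The property `P` of a 132-avoiding word split at its maximum as `A M B` amounts to `Q` for `A`
and `P` for `B`, as needed for a quadratic recursion for the number of words with property `P`. -/
def FactorsAtMax (P Q : List ℕ → Prop) : Prop :=
  ∀ ⦃A : List ℕ⦄ ⦃M : ℕ⦄ ⦃B : List ℕ⦄, IsMaxSplit A M B → (P (A ++ M :: B) ↔ Q A ∧ P B)

theorem mem_avoiders132 : L ∈ avoiders132 P c n ↔ L ~ List.range' c n ∧ Avoids132 L ∧ P L := by
  simp [avoiders132]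

theorem length_of_mem_avoiders132 (hL : L ∈ avoiders132 P c n) : L.length = n := by
  simpa using (mem_avoiders132.1 hL).1.length_eq

theorem perm_range'_of_append_perm (h : A ++ B ~ List.range' c n)
    (hAB : ∀ x ∈ A, ∀ y ∈ B, y < x) :
    A ~ List.range' (c + B.length) A.length ∧ B ~ List.range' c B.length := by
  have hlen : B.length + A.length = n := by simpa [add_comm] using h.length_eq
  have hsorted : (B.insertionSort (· ≤ ·) ++ A.insertionSort (· ≤ ·)).Pairwise (· ≤ ·) :=
    List.pairwise_append.2 ⟨List.pairwise_insertionSort _ B, List.pairwise_insertionSort _ A,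
      fun y hy x hx => (hAB x ((List.mem_insertionSort _).1 hx) y
        ((List.mem_insertionSort _).1 hy)).le⟩
  have hperm : B.insertionSort (· ≤ ·) ++ A.insertionSort (· ≤ ·) ~ List.range' c n :=
    ((List.perm_insertionSort _ B).append (List.perm_insertionSort _ A)).trans
      (List.perm_append_comm.trans h)
  have heq := hperm.eq_of_pairwise' hsorted (List.pairwise_le_range' 1)
  rw [← hlen, ← List.range'_append_1] at heq
  obtain ⟨hB, hA⟩ := List.append_inj heq (by simp)
  exact ⟨hA ▸ (List.perm_insertionSort _ A).symm, hB ▸ (List.perm_insertionSort _ B).symm⟩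

theorem append_cons_perm_range'_iff :
    A ++ (c + n) :: B ~ List.range' c (n + 1) ↔ A ++ B ~ List.range' c n := by
  rw [List.range'_1_concat, List.perm_comm, (List.perm_append_singleton _ _).congr_left,
    List.perm_middle.congr_right, List.perm_cons, List.perm_comm]

theorem isMaxSplit_of_perm_range' {a b : ℕ} (hA : A ~ List.range' (c + b) a)
    (hB : B ~ List.range' c b) : IsMaxSplit A (c + (a + b)) B := by
  have hAmem : ∀ x ∈ A, c + b ≤ x ∧ x < c + b + a := fun x hx =>
    List.mem_range'_1.1 (hA.mem_iff.1 hx)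
  have hBmem : ∀ y ∈ B, c ≤ y ∧ y < c + b := fun y hy => List.mem_range'_1.1 (hB.mem_iff.1 hy)
  exact ⟨by grind, by grind, by grind⟩

theorem FactorsAtMax.append_cons_mem_avoiders132_iff (hPQ : FactorsAtMax P Q) :
    A ++ (c + n) :: B ∈ avoiders132 P c (n + 1) ↔ A.length + B.length = n ∧
      A ∈ avoiders132 Q (c + B.length) A.length ∧ B ∈ avoiders132 P c B.length := by
  simp only [mem_avoiders132, append_cons_perm_range'_iff]
  constructor
  · rintro ⟨hperm, hav, hP⟩
    have hsplit : IsMaxSplit A (c + n) B := hav.isMaxSplit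
      (hperm.nodup_iff.2 List.nodup_range') fun x hx => (List.mem_range'_1.1 (hperm.mem_iff.1 hx)).2
    obtain ⟨hA, hB⟩ := perm_range'_of_append_perm hperm hsplit.right_lt_left
    obtain ⟨havA, havB⟩ := hsplit.avoids132_iff.1 hav
    obtain ⟨hQA, hPB⟩ := (hPQ hsplit).1 hP
    exact ⟨by simpa using hperm.length_eq, ⟨hA, havA, hQA⟩, hB, havB, hPB⟩
  · rintro ⟨rfl, ⟨hA, havA, hQA⟩, hB, havB, hPB⟩
    have hsplit := isMaxSplit_of_perm_range' hA hB
    refine ⟨?_, hsplit.avoids132_iff.2 ⟨havA, havB⟩, (hPQ hsplit).2 ⟨hQA, hPB⟩⟩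
    rw [add_comm, ← List.range'_append_1]
    exact List.perm_append_comm.trans (hB.append hA)

theorem FactorsAtMax.card_avoiders132_succ (hPQ : FactorsAtMax P Q) (c n : ℕ) :
    (avoiders132 P c (n + 1)).card = ∑ p ∈ antidiagonal n,
      (avoiders132 Q (c + p.2) p.1).card * (avoiders132 P c p.2).card := by
  simp_rw [← Finset.card_product, ← Finset.card_sigma]
  symm
  have hnotMem : ∀ {R d m L}, L ∈ avoiders132 R d m → d + m ≤ c + n → c + n ∉ L := by
    intro R d m L hL hle hmem
    have hlt := (List.mem_range'_1.1 ((mem_avoiders132.1 hL).1.mem_iff.1 hmem)).2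
    omega
  refine Finset.card_bij (fun q _ => q.2.1 ++ (c + n) :: q.2.2) ?_ ?_ ?_
  · rintro ⟨⟨a, b⟩, A, B⟩ hq
    simp only [Finset.mem_sigma, mem_antidiagonal, Finset.mem_product] at hq
    obtain ⟨hab, hA, hB⟩ := hq
    obtain rfl := length_of_mem_avoiders132 hA
    obtain rfl := length_of_mem_avoiders132 hB
    exact hPQ.append_cons_mem_avoiders132_iff.2 ⟨hab, hA, hB⟩
  · rintro ⟨⟨a, b⟩, A, B⟩ hq ⟨⟨a', b'⟩, A', B'⟩ hq' heq
    simp only [Finset.mem_sigma, mem_antidiagonal, Finset.mem_product] at hq hq'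
    obtain ⟨hab, hA, hB⟩ := hq
    obtain ⟨hab', hA', hB'⟩ := hq'
    obtain ⟨rfl, -, rfl⟩ := (List.append_cons_inj_of_notMem (hnotMem hA (by omega))
      (hnotMem hB (by omega))).1 heq
    rw [← length_of_mem_avoiders132 hA, ← length_of_mem_avoiders132 hA',
      ← length_of_mem_avoiders132 hB, ← length_of_mem_avoiders132 hB']
  · intro L hL
    have hmax : c + n ∈ L := (mem_avoiders132.1 hL).1.mem_iff.2 (by simp)
    obtain ⟨A, B, rfl⟩ := List.append_of_mem hmax
    obtain ⟨hlen, hA, hB⟩ := hPQ.append_cons_mem_avoiders132_iff.1 hL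
    exact ⟨⟨(A.length, B.length), A, B⟩, by simp [hlen, hA, hB], rfl⟩

theorem factorsAtMax_not_containsRecords {k : ℕ} (hlk : l ≤ k) :
    FactorsAtMax (fun L => ¬ContainsRecords l (k + 1) L) (fun L => ¬ContainsRecords l k L) :=
  fun _ _ _ h => (not_congr (h.containsRecords_succ_iff hlk)).trans not_or

theorem card_avoiders132_zero (hP : P []) (c : ℕ) : (avoiders132 P c 0).card = 1 := by
  refine Finset.card_eq_one.2 ⟨[], Finset.ext fun L => ?_⟩
  rw [mem_avoiders132, List.range'_zero, List.perm_nil, Finset.mem_singleton]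
  exact ⟨And.left, by rintro rfl; exact ⟨rfl, List.Triplewise.nil, hP⟩⟩

theorem card_avoiders132_true (c n : ℕ) :
    (avoiders132 (fun _ => True) c n).card = catalan n := by
  induction n using Nat.strong_induction_on generalizing c with
  | _ n ih =>
    cases n with
    | zero => rw [card_avoiders132_zero trivial, catalan_zero]
    | succ n =>
      have htrue : FactorsAtMax (fun _ => True) (fun _ => True) :=
        fun _ _ _ _ => and_self_iff.symm
      rw [htrue.card_avoiders132_succ, catalan_succ']
      refine Finset.sum_congr rfl fun p hp => ?_
      rw [mem_antidiagonal] at hp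
      rw [ih p.1 (by omega), ih p.2 (by omega)]

theorem card_avoiders132_length_lt (l c n : ℕ) :
    (avoiders132 (fun L => L.length < l) c n).card = if n < l then catalan n else 0 := by
  split_ifs with hn
  · rw [← card_avoiders132_true c n]
    congr 1
    ext L
    simp only [mem_avoiders132]
    exact and_congr_right fun hL => by simp [hL.length_eq, hn]
  · refine Finset.card_eq_zero.2 (Finset.eq_empty_of_forall_notMem fun L hL => ?_)
    exact hn (length_of_mem_avoiders132 hL ▸ (mem_avoiders132.1 hL).2.2)

section PowerSeries

open PowerSeries

variable {K : Type*} [Field K]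

theorem inv_one_sub_X_mul_eq (F : K⟦X⟧) :
    (1 - X * F)⁻¹ = 1 + X * (F * (1 - X * F)⁻¹) := by
  have hinv : (1 - X * F) * (1 - X * F)⁻¹ = 1 := PowerSeries.mul_inv_cancel _ (by simp)
  linear_combination hinv

theorem FactorsAtMax.card_avoiders132_eq_coeff_inv (hPQ : FactorsAtMax P Q) (hP : P [])
    {F : K⟦X⟧} (hQ : ∀ c n, ((avoiders132 Q c n).card : K) = coeff n F) (c n : ℕ) :
    ((avoiders132 P c n).card : K) = coeff n (1 - X * F)⁻¹ := by
  induction n using Nat.strong_induction_on generalizing c with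
  | _ n ih =>
    rw [inv_one_sub_X_mul_eq, map_add]
    cases n with
    | zero => simp [card_avoiders132_zero hP]
    | succ n =>
      rw [hPQ.card_avoiders132_succ, coeff_succ_X_mul, coeff_mul, coeff_one, if_neg n.succ_ne_zero,
        zero_add, Nat.cast_sum]
      refine Finset.sum_congr rfl fun p hp => ?_
      rw [mem_antidiagonal] at hp
      rw [Nat.cast_mul, hQ, ih p.2 (by omega)]

theorem coeff_catE (l n : ℕ) : coeff n (catE l) = if n < l then (catalan n : ℚ) else 0 := by
  simp only [catE, map_sum, coeff_C_mul, coeff_X_pow, mul_ite, mul_one, mul_zero,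
    Finset.sum_ite_eq, Finset.mem_range]

theorem card_avoiders132_not_containsRecords (l m c n : ℕ) :
    ((avoiders132 (fun L => ¬ContainsRecords l (l + m) L) c n).card : ℚ) =
      coeff n (Rcf (catE l) m) := by
  induction m generalizing c n with
  | zero =>
    simp only [add_zero, containsRecords_self_iff, not_le, card_avoiders132_length_lt, Rcf,
      coeff_catE, Nat.cast_ite, Nat.cast_zero]
  | succ m ih =>
    exact (factorsAtMax_not_containsRecords (l.le_add_right m)).card_avoiders132_eq_coeff_inv
      not_containsRecords_succ_nil ih c n

end PowerSeries

end Counting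

section OneLine

variable {k n l : ℕ}

theorem contains_p132_iff (π : Equiv.Perm (Fin n)) :
    Contains p132 π ↔ ∃ i j k, i < j ∧ j < k ∧ π i < π k ∧ π k < π j := by
  have h0 : p132 0 = 0 := rfl
  have h1 : p132 1 = 2 := rfl
  have h2 : p132 2 = 1 := rfl
  constructor
  · rintro ⟨f, hf, hτ⟩
    exact ⟨f 0, f 1, f 2, hf (by decide), hf (by decide), (hτ 0 2).1 (by decide +revert),
      (hτ 2 1).1 (by decide +revert)⟩
  · rintro ⟨i, j, k, hij, hjk, hik, hkj⟩
    refine ⟨![i, j, k], ?_, ?_⟩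
    · rw [Fin.strictMono_iff_lt_succ]
      simp [Fin.forall_fin_succ, hij, hjk]
    · simp [Fin.forall_fin_succ, h0, h1, h2, hik, hkj, hik.trans hkj, hik.le, hkj.le,
        (hik.trans hkj).le]

theorem exists_perm_lt_iff_lt {α : Type*} [LinearOrder α] {g : Fin k → α}
    (hg : Function.Injective g) : ∃ τ : Equiv.Perm (Fin k), ∀ a b, τ a < τ b ↔ g a < g b := by
  have hsort : StrictMono (g ∘ Tuple.sort g) :=
    (Tuple.monotone_sort g).strictMono_of_injective (hg.comp (Tuple.sort g).injective)
  refine ⟨(Tuple.sort g)⁻¹, fun a b => ?_⟩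
  rw [← hsort.lt_iff_lt]
  simp

theorem mem_Ulk_iff {τ : Equiv.Perm (Fin k)} :
    τ ∈ Ulk l k ↔ ∀ a b : Fin k, a < b → l ≤ (b : ℕ) → τ a < τ b := by
  refine ⟨fun hτ a b hab hlb => ?_, fun hτ b hlb => ?_⟩
  · rw [hτ b hlb]
    by_contra! hba
    have hfix : τ (τ a) = τ a := hτ (τ a) (hlb.trans hba)
    exact (hab.trans_le hba).ne (τ.injective hfix).symm
  · have hIio : (Finset.Iio b).map τ.toEmbedding = Finset.Iio (τ b) := by
      ext c
      obtain ⟨a, rfl⟩ := τ.surjective c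
      simp only [Finset.mem_map_equiv, Equiv.symm_apply_apply, Finset.mem_Iio]
      refine ⟨fun hab => hτ a b hab hlb, fun hab => ?_⟩
      by_contra! hba
      obtain rfl | hlt := hba.eq_or_lt
      · exact hab.false
      · exact lt_asymm hab (hτ b a hlt (hlb.trans hlt.le))
    have hcard := congrArg Finset.card hIio
    rw [Finset.card_map, Fin.card_Iio, Fin.card_Iio] at hcard
    exact Fin.ext hcard.symm

theorem exists_mem_Ulk_contains_iff (π : Equiv.Perm (Fin n)) :
    (∃ τ ∈ Ulk l k, Contains τ π) ↔ ∃ f : Fin k → Fin n, StrictMono f ∧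
      ∀ a b : Fin k, a < b → l ≤ (b : ℕ) → π (f a) < π (f b) := by
  constructor
  · rintro ⟨τ, hτ, f, hf, hπ⟩
    exact ⟨f, hf, fun a b hab hlb => (hπ a b).1 (mem_Ulk_iff.1 hτ a b hab hlb)⟩
  · rintro ⟨f, hf, hrec⟩
    obtain ⟨τ, hτ⟩ := exists_perm_lt_iff_lt (π.injective.comp hf.injective)
    exact ⟨τ, mem_Ulk_iff.2 fun a b hab hlb => (hτ a b).2 (hrec a b hab hlb), f, hf, hτ⟩

theorem sublist_ofFn_iff {α : Type*} {g : Fin n → α} {S : List α} :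
    S <+ List.ofFn g ↔
      ∃ f : Fin S.length → Fin n, StrictMono f ∧ ∀ i, S.get i = g (f i) := by
  have hlen : (List.ofFn g).length = n := List.length_ofFn
  rw [List.sublist_iff_exists_fin_orderEmbedding_get_eq]
  constructor
  · rintro ⟨f, hf⟩
    exact ⟨fun i => (f i).cast hlen, f.strictMono, fun i => (hf i).trans (List.get_ofFn g _)⟩
  · rintro ⟨f, hf, hS⟩
    exact ⟨OrderEmbedding.ofStrictMono (fun i => (f i).cast hlen.symm) hf,
      fun i => (hS i).trans (List.get_ofFn g ((f i).cast hlen.symm)).symm⟩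

/-- The one-line notation `π(0) π(1) … π(n-1)` of a permutation. The letters are natural numbers
rather than elements of `Fin n`, so that factors of words of any length have a common type. -/
def oneLine (π : Equiv.Perm (Fin n)) : List ℕ :=
  List.ofFn fun i => (π i : ℕ)

theorem oneLine_injective : Function.Injective (oneLine (n := n)) := fun _ _ h =>
  Equiv.ext fun i => Fin.ext (congrFun (List.ofFn_injective h) i)

theorem oneLine_perm (π : Equiv.Perm (Fin n)) : oneLine π ~ List.range' 0 n := by
  have hval : List.ofFn (Fin.val : Fin n → ℕ) = List.range n := by
    rw [List.ofFn_eq_map, List.map_coe_finRange_eq_range]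
  rw [← List.range_eq_range', ← hval]
  exact π.ofFn_comp_perm Fin.val

theorem exists_oneLine_eq {L : List ℕ} (hL : L ~ List.range' 0 n) :
    ∃ π : Equiv.Perm (Fin n), oneLine π = L := by
  obtain rfl : L.length = n := by simpa using hL.length_eq
  have hlt : ∀ i : Fin L.length, L.get i < L.length := fun i => by
    simpa using hL.mem_iff.1 (L.get_mem i)
  have hinj : Function.Injective fun i => (⟨L.get i, hlt i⟩ : Fin L.length) := fun i j hij =>
    (hL.nodup_iff.2 List.nodup_range').injective_get (Fin.mk.inj hij)
  refine ⟨Equiv.ofBijective _ (Finite.injective_iff_bijective.1 hinj), ?_⟩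
  simp [oneLine]

theorem avoids132_oneLine_iff (π : Equiv.Perm (Fin n)) :
    Avoids132 (oneLine π) ↔ ¬Contains p132 π := by
  rw [contains_p132_iff, Avoids132, List.triplewise_iff_getElem]
  simp only [not_exists, oneLine, List.getElem_ofFn, List.length_ofFn, not_and]
  exact ⟨fun h i j k hij hjk hik => h i j k hij hjk k.2 hik,
    fun h i j k hij hjk hk hik => h ⟨i, by omega⟩ ⟨j, by omega⟩ ⟨k, hk⟩ hij hjk hik⟩

theorem containsRecords_oneLine_iff (π : Equiv.Perm (Fin n)) :
    ContainsRecords l k (oneLine π) ↔ ∃ τ ∈ Ulk l k, Contains τ π := by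
  rw [exists_mem_Ulk_contains_iff]
  constructor
  · rintro ⟨S, hS, rfl, hrec⟩
    obtain ⟨f, hf, hSf⟩ := sublist_ofFn_iff.1 hS
    refine ⟨f, hf, fun a b hab hlb => ?_⟩
    have hab' : S.get a < S.get b := hrec hab b.2 hlb
    rwa [hSf, hSf] at hab'
  · rintro ⟨f, hf, hrec⟩
    have hlen : (List.ofFn fun i => (π (f i) : ℕ)).length = k := List.length_ofFn
    refine ⟨List.ofFn fun i => (π (f i) : ℕ), sublist_ofFn_iff.2
      ⟨fun i => f (i.cast hlen), fun i j hij => hf hij, fun i => List.get_ofFn _ i⟩, hlen, ?_⟩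
    intro i j hij hj hlj
    simpa using hrec ⟨i, by omega⟩ ⟨j, by omega⟩ hij hlj

theorem card_perm_oneLine (P : List ℕ → Prop) (n : ℕ) :
    Nat.card {π : Equiv.Perm (Fin n) // Avoids132 (oneLine π) ∧ P (oneLine π)} =
      (avoiders132 P 0 n).card := by
  have himage : oneLine '' {π : Equiv.Perm (Fin n) | Avoids132 (oneLine π) ∧ P (oneLine π)} =
      avoiders132 P 0 n := by
    ext L
    rw [Finset.mem_coe, mem_avoiders132]
    constructor
    · rintro ⟨π, hπ, rfl⟩
      exact ⟨oneLine_perm π, hπ⟩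
    · rintro ⟨hL, hP⟩
      obtain ⟨π, rfl⟩ := exists_oneLine_eq hL
      exact ⟨π, hP, rfl⟩
  rw [← Set.ncard_coe_finset, ← himage, Set.ncard_image_of_injective _ oneLine_injective]
  rfl

end OneLine

/-- For `k ≥ l ≥ 1`, the generating function for `132`-avoiding
permutations avoiding every pattern in `U_l^k` equals the continued fraction
`R_{k−l;E}` with `E = Σ_{j=0}^{l−1} C_j X^j`. -/
theorem stmt7 (k l : ℕ) (hl : 1 ≤ l) (hlk : l ≤ k) :
    (PowerSeries.mk fun n => ((Nat.card {π : Equiv.Perm (Fin n) //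
        ¬ Contains p132 π ∧ ∀ τ ∈ Ulk l k, ¬ Contains τ π} : ℕ) : ℚ))
      = Rcf (catE l) (k - l) := by
  obtain ⟨m, rfl⟩ := Nat.exists_eq_add_of_le hlk
  ext n
  simp only [PowerSeries.coeff_mk, ← avoids132_oneLine_iff]
  rw [Nat.add_sub_cancel_left, ← card_avoiders132_not_containsRecords l m 0 n, ← card_perm_oneLine]
  simp only [containsRecords_oneLine_iff, not_exists, not_and]
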